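/- arXiv:1810.08121 — 2 statements merged into one kernel-verified Lean document; each statement's English description precedes it below -/
import Mathlib

section
/- Let A and B be 2×2 matrices with entries in R, with tensor components a_κ = Tr(σ_κ A) and b_κ = Tr(σ_κ B). Then the scalar component of the anticommutator satisfies Tr({A,B}) = (1/2)( {a₀, b₀} + Σ_{k=1}^{3} {a_k, b_k} ). -/
open Matrix Kronecker

/-- The Pauli matrices `σ₀ = I₂, σ₁, σ₂, σ₃`, with complex entries regarded as
elements of an associative unital `ℂ`-algebra `R` via the algebra map. -/
noncomputable def pauli (R : Type*) [Ring R] [Algebra ℂ R] : Fin 4 → Matrix (Fin 2) (Fin 2) R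
  | 0 => !![1, 0; 0, 1]
  | 1 => !![0, 1; 1, 0]
  | 2 => !![0, -(algebraMap ℂ R Complex.I); algebraMap ℂ R Complex.I, 0]
  | 3 => !![1, 0; 0, -1]

/-- The Levi-Civita symbol `ε_{ijk}` on indices in `{1,2,3}` (represented by `Fin 3`). -/
def eps (i j k : Fin 3) : ℤ :=
  ((j.val : ℤ) - i.val) * ((k.val : ℤ) - i.val) * ((k.val : ℤ) - j.val) / 2

/-!
Pauli completeness reads `2 A = ∑ κ, Tr(σ_κ A) σ_κ`. Multiplying it on the right by `B` and
taking traces gives `2 Tr(A B) = ∑ κ, a_κ b_κ` with the order of the factors preserved. As the trace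
over a noncommutative ring is not cyclic, the claim comes from adding this identity for `(A, B)` to
the one for `(B, A)`.
-/

section PauliCompleteness

variable {R : Type*} [Ring R] [Algebra ℂ R] (A B : Matrix (Fin 2) (Fin 2) R)

theorem trace_pauli_zero_mul : (pauli R 0 * A).trace = A 0 0 + A 1 1 := by
  simp [pauli, Matrix.trace_fin_two, vecMul, dotProduct]

theorem trace_pauli_one_mul : (pauli R 1 * A).trace = A 1 0 + A 0 1 := by
  simp [pauli, Matrix.trace_fin_two, vecMul, dotProduct]

theorem trace_pauli_two_mul :
    (pauli R 2 * A).trace = (A 0 1 - A 1 0) * algebraMap ℂ R Complex.I := by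
  simp [pauli, Matrix.trace_fin_two, vecMul, dotProduct, sub_mul, Algebra.commutes,
    neg_add_eq_sub]

theorem trace_pauli_three_mul : (pauli R 3 * A).trace = A 0 0 - A 1 1 := by
  simp [pauli, Matrix.trace_fin_two, vecMul, dotProduct, sub_eq_add_neg]

theorem sum_smul_pauli (c : Fin 4 → R) :
    ∑ κ, c κ • pauli R κ =
      !![c 0 + c 3, c 1 - c 2 * algebraMap ℂ R Complex.I;
        c 1 + c 2 * algebraMap ℂ R Complex.I, c 0 - c 3] := by
  simp [Fin.sum_univ_four, pauli, sub_eq_add_neg]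

theorem algebraMap_I_mul_self : algebraMap ℂ R Complex.I * algebraMap ℂ R Complex.I = -1 := by
  rw [← map_mul, Complex.I_mul_I, map_neg, map_one]

theorem sum_trace_pauli_mul_smul_pauli :
    ∑ κ, (pauli R κ * A).trace • pauli R κ = (2 : ℂ) • A := by
  rw [sum_smul_pauli, two_smul, Matrix.eta_fin_two (A + A)]
  simp only [trace_pauli_zero_mul, trace_pauli_one_mul, trace_pauli_two_mul,
    trace_pauli_three_mul, mul_assoc, algebraMap_I_mul_self, mul_neg_one, neg_sub,
    add_add_sub_cancel, add_sub_sub_cancel, Matrix.add_apply]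

theorem sum_trace_pauli_mul_mul_trace_pauli_mul :
    ∑ κ, (pauli R κ * A).trace * (pauli R κ * B).trace = (2 : ℂ) • (A * B).trace :=
  calc ∑ κ, (pauli R κ * A).trace * (pauli R κ * B).trace
    _ = ((∑ κ, (pauli R κ * A).trace • pauli R κ) * B).trace := by
      simp only [Matrix.sum_mul, Matrix.trace_sum, Matrix.smul_mul, Matrix.trace_smul, smul_eq_mul]
    _ = (2 : ℂ) • (A * B).trace := by
      rw [sum_trace_pauli_mul_smul_pauli, Matrix.smul_mul, Matrix.trace_smul]

end PauliCompleteness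

/-- Scalar component of the anticommutator of two 2×2 matrices over a `ℂ`-algebra:
`Tr({A,B}) = (1/2)({a₀,b₀} + Σ_k {a_k,b_k})`. -/
theorem spinor_anticommutator_scalar (R : Type*) [Ring R] [Algebra ℂ R]
    (A B : Matrix (Fin 2) (Fin 2) R) (a b : Fin 4 → R)
    (ha : ∀ κ : Fin 4, a κ = (pauli R κ * A).trace)
    (hb : ∀ κ : Fin 4, b κ = (pauli R κ * B).trace) :
    (A * B + B * A).trace =
      (1/2 : ℂ) •
        ((a 0 * b 0 + b 0 * a 0)
          + ∑ k : Fin 3, (a k.succ * b k.succ + b k.succ * a k.succ)) := by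
  have hab : ∑ κ, a κ * b κ = (2 : ℂ) • (A * B).trace := by
    simp only [ha, hb, sum_trace_pauli_mul_mul_trace_pauli_mul]
  have hba : ∑ κ, b κ * a κ = (2 : ℂ) • (B * A).trace := by
    simp only [ha, hb, sum_trace_pauli_mul_mul_trace_pauli_mul]
  rw [← Fin.sum_univ_succ (fun κ => a κ * b κ + b κ * a κ), Finset.sum_add_distrib, hab, hba,
    ← smul_add, smul_smul, Matrix.trace_add]
  norm_num
end

section
/- Let A and B be 4×4 matrices with entries in R, with two-spin tensor components a_{κ,λ} and b_{κ,λ}. Then for each l ∈ {1,2,3}, the first-spin vector component of the commutator satisfies Tr((σ_l ⊗ σ₀) [A,B]) = (1/4) Σ_{λ=0}^{3} ( [a_{0,λ}, b_{l,λ}] + [a_{l,λ}, b_{0,λ}] + i ε_{l l₁ l₂} {a_{l₁,λ}, b_{l₂,λ}} ). -/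
open Matrix Kronecker

/-!
A two-spin matrix is a one-spin matrix `X` with entries in the `ℂ`-algebra of `2 × 2` matrices
over `R`, and its components are the second-spin components of the first-spin ones, as the entries
of the Pauli matrices are central. Expanding only the left factor, `X = ½ ∑ x_κ σ_κ`, and using
`σ_i σ_j = δ_ij + i ε_ijk σ_k` gives, over any `ℂ`-algebra,
`Tr (X Y) = ½ ∑ x_κ y_κ` and
`Tr (σ_l X Y) = ½ (x_0 y_l + x_l y_0 + i ε_ljk x_j y_k)`.
The second identity is applied to the first spin and the first one to the second spin. In the
commutator, the antisymmetry of `ε` turns the difference of the `ε`-terms into an anticommutator.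
-/

section Blocks

lemma trace_comp_eq_trace_trace {m n R : Type*} [Fintype m] [Fintype n] [AddCommMonoid R]
    (X : Matrix m m (Matrix n n R)) : (comp m m n n R X).trace = X.trace.trace :=
  (Fintype.sum_prod_type _).trans (trace_sum _ _).symm

variable {𝕜 R m n : Type*} [CommSemiring 𝕜] [Semiring R] [Algebra 𝕜 R] [Fintype m]

lemma map_algebraMap_mul_smul {l : Type*} (M : Matrix l m 𝕜) (r : R) (X : Matrix m n R) :
    M.map (algebraMap 𝕜 R) * (r • X) = r • (M.map (algebraMap 𝕜 R) * X) := by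
  ext i j
  simp only [mul_apply, map_apply, Matrix.smul_apply, smul_eq_mul, Finset.mul_sum,
    Algebra.left_comm]

lemma trace_kronecker_mul_eq_trace_trace [Fintype n] [DecidableEq n] (M : Matrix m m 𝕜)
    (N : Matrix n n R) (A : Matrix (m × n) (m × n) R) :
    (M.map (algebraMap 𝕜 R) ⊗ₖ N * A).trace =
      (N * (M.map (algebraMap 𝕜 (Matrix n n R)) * (compRingEquiv m n R).symm A).trace).trace := by
  have kronecker_eq : M.map (algebraMap 𝕜 R) ⊗ₖ N = compRingEquiv m n R (M.map (· • N)) := by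
    ext
    simp [← Algebra.smul_def]
  calc
    _ = (compRingEquiv m n R (M.map (· • N) * (compRingEquiv m n R).symm A)).trace := by
      rw [map_mul, ← kronecker_eq, RingEquiv.apply_symm_apply]
    _ = (M.map (· • N) * (compRingEquiv m n R).symm A).trace.trace :=
      trace_comp_eq_trace_trace _
    _ = _ := by
      congr 1
      simp only [trace, diag_apply, mul_apply (m := m), map_apply, Finset.mul_sum,
        ← Algebra.smul_def, mul_smul_comm, smul_mul_assoc]

end Blocks

lemma eps_swap (i j k : Fin 3) : eps i k j = -eps i j k := by
  decide +revert

lemma sum_eps_smul_swap {M : Type*} [AddCommGroup M] (i : Fin 3) (f : Fin 3 → Fin 3 → M) :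
    ∑ j, ∑ k, eps i j k • f k j = -∑ j, ∑ k, eps i j k • f j k := by
  rw [Finset.sum_comm]
  simp only [← Finset.sum_neg_distrib, ← neg_smul, ← eps_swap]

section Spin

variable {R : Type*} [Ring R] [Algebra ℂ R]

lemma pauli_zero : pauli R 0 = 1 :=
  one_fin_two.symm

lemma pauli_eq_map (κ : Fin 4) : pauli R κ = (pauli ℂ κ).map (algebraMap ℂ R) := by
  ext i j
  fin_cases κ <;> fin_cases i <;> fin_cases j <;> simp [pauli]

lemma pauli_mul_smul {n : Type*} (κ : Fin 4) (r : R) (X : Matrix (Fin 2) n R) :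
    pauli R κ * (r • X) = r • (pauli R κ * X) := by
  rw [pauli_eq_map, map_algebraMap_mul_smul]

lemma pauli_succ_mul_pauli_succ (i j : Fin 3) :
    pauli R i.succ * pauli R j.succ =
      (if i = j then 1 else 0) + Complex.I • ∑ k, eps i j k • pauli R k.succ := by
  ext s t
  fin_cases i <;> fin_cases j <;> fin_cases s <;> fin_cases t <;>
    simp [pauli, eps, Fin.sum_univ_three, Algebra.algebraMap_eq_smul_one, smul_smul]

/-- The one-spin component `x_κ = Tr (σ_κ X)`. Over the ring of `2 × 2` matrices it also serves as
the partial trace of `(σ_κ ⊗ 1) A` over the first of two spins. -/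
noncomputable def pauliComponent (κ : Fin 4) : Matrix (Fin 2) (Fin 2) R →ₗ[ℂ] R :=
  traceLinearMap (Fin 2) ℂ R ∘ₗ LinearMap.mulLeft ℂ (pauli R κ)

lemma pauliComponent_apply (κ : Fin 4) (X : Matrix (Fin 2) (Fin 2) R) :
    pauliComponent κ X = (pauli R κ * X).trace :=
  rfl

lemma pauliComponent_zero (X : Matrix (Fin 2) (Fin 2) R) : pauliComponent 0 X = X.trace := by
  rw [pauliComponent_apply, pauli_zero, one_mul]

lemma pauliComponent_eq_vec (κ : Fin 4) (X : Matrix (Fin 2) (Fin 2) R) :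
    pauliComponent κ X =
      ![X 0 0 + X 1 1, X 0 1 + X 1 0, Complex.I • (X 0 1 - X 1 0), X 0 0 - X 1 1] κ := by
  rw [pauliComponent_apply, trace_fin_two, mul_apply, mul_apply]
  fin_cases κ <;> simp [pauli, Algebra.smul_def, mul_add, sub_eq_add_neg, add_comm]

lemma sum_pauliComponent_smul_pauli (X : Matrix (Fin 2) (Fin 2) R) :
    ∑ κ, pauliComponent κ X • pauli R κ = (2 : ℂ) • X := by
  have I_smul_mul_I (x : R) : Complex.I • (x * algebraMap ℂ R Complex.I) = -x := by
    rw [← Algebra.commutes, ← Algebra.smul_def, smul_smul, Complex.I_mul_I, neg_one_smul]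
  rw [two_smul, Fin.sum_univ_four]
  ext s t
  fin_cases s <;> fin_cases t <;>
    simp only [pauliComponent_eq_vec, pauli, Matrix.add_apply, Matrix.smul_apply, of_apply,
      cons_val, cons_val', cons_val_fin_one, Fin.zero_eta, Fin.mk_one, smul_eq_mul, mul_one,
      mul_zero, mul_neg, smul_mul_assoc, sub_mul, smul_sub, I_smul_mul_I] <;>
    abel

lemma pauliComponent_mul (κ : Fin 4) (X Y : Matrix (Fin 2) (Fin 2) R) :
    pauliComponent κ (X * Y) =
      (1 / 2 : ℂ) • ∑ ν, pauliComponent ν X * (pauli R κ * pauli R ν * Y).trace := by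
  have expansion : X = (1 / 2 : ℂ) • ∑ ν, pauliComponent ν X • pauli R ν := by
    rw [sum_pauliComponent_smul_pauli, smul_smul]
    norm_num
  conv_lhs => rw [expansion]
  simp only [smul_mul_assoc, map_smul, Finset.sum_mul, map_sum, pauliComponent_apply,
    pauli_mul_smul, trace_smul, smul_eq_mul, mul_assoc]

lemma trace_mul_eq_sum_pauliComponent (X Y : Matrix (Fin 2) (Fin 2) R) :
    (X * Y).trace = (1 / 2 : ℂ) • ∑ ν, pauliComponent ν X * pauliComponent ν Y := by
  rw [← pauliComponent_zero, pauliComponent_mul]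
  simp only [pauli_zero, one_mul, pauliComponent_apply]

lemma trace_pauli_succ_mul_pauli_succ_mul (i j : Fin 3) (X : Matrix (Fin 2) (Fin 2) R) :
    (pauli R i.succ * pauli R j.succ * X).trace =
      (if i = j then pauliComponent 0 X else 0) +
        Complex.I • ∑ k, eps i j k • pauliComponent k.succ X := by
  simp only [pauli_succ_mul_pauli_succ, add_mul, ite_mul, one_mul, zero_mul, smul_mul_assoc,
    Finset.sum_mul, trace_add, apply_ite trace, trace_zero, trace_smul, trace_sum,
    pauliComponent_apply, pauli_zero]

lemma pauliComponent_succ_mul (l : Fin 3) (X Y : Matrix (Fin 2) (Fin 2) R) :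
    pauliComponent l.succ (X * Y) =
      (1 / 2 : ℂ) • (pauliComponent 0 X * pauliComponent l.succ Y +
        pauliComponent l.succ X * pauliComponent 0 Y +
        Complex.I • ∑ j : Fin 3, ∑ k : Fin 3,
          eps l j k • (pauliComponent j.succ X * pauliComponent k.succ Y)) := by
  simp only [pauliComponent_mul, Fin.sum_univ_succ (n := 3), pauli_zero, mul_one,
    ← pauliComponent_apply, trace_pauli_succ_mul_pauli_succ_mul, mul_add, mul_ite, mul_zero,
    Finset.sum_add_distrib, Finset.sum_ite_eq, Finset.mem_univ, if_true, mul_smul_comm,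
    Finset.mul_sum, ← Finset.smul_sum, add_assoc]

/-- The two-spin tensor component `a_{κ,μ} = Tr ((σ_κ ⊗ σ_μ) A)`, with `A` first so that
`twoSpinComponent A` is the array of components of `A`. -/
noncomputable def twoSpinComponent (A : Matrix (Fin 2 × Fin 2) (Fin 2 × Fin 2) R)
    (κ μ : Fin 4) : R :=
  (pauli R κ ⊗ₖ pauli R μ * A).trace

lemma twoSpinComponent_eq_pauliComponent (A : Matrix (Fin 2 × Fin 2) (Fin 2 × Fin 2) R)
    (κ μ : Fin 4) :
    twoSpinComponent A κ μ =
      pauliComponent μ (pauliComponent κ ((compRingEquiv (Fin 2) (Fin 2) R).symm A)) := by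
  rw [twoSpinComponent, pauli_eq_map κ, trace_kronecker_mul_eq_trace_trace, ← pauli_eq_map]
  rfl

lemma twoSpinComponent_sub (A B : Matrix (Fin 2 × Fin 2) (Fin 2 × Fin 2) R) (κ μ : Fin 4) :
    twoSpinComponent (A - B) κ μ = twoSpinComponent A κ μ - twoSpinComponent B κ μ := by
  simp only [twoSpinComponent, mul_sub, trace_sub]

lemma twoSpinComponent_succ_zero_mul (A B : Matrix (Fin 2 × Fin 2) (Fin 2 × Fin 2) R)
    (l : Fin 3) :
    twoSpinComponent (A * B) l.succ 0 =
      (1 / 4 : ℂ) • ∑ μ, (twoSpinComponent A 0 μ * twoSpinComponent B l.succ μ +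
        twoSpinComponent A l.succ μ * twoSpinComponent B 0 μ +
        Complex.I • ∑ j : Fin 3, ∑ k : Fin 3,
          eps l j k • (twoSpinComponent A j.succ μ * twoSpinComponent B k.succ μ)) := by
  simp only [twoSpinComponent_eq_pauliComponent, map_mul, pauliComponent_succ_mul]
  rw [pauliComponent_zero]
  simp only [trace_smul, trace_add, trace_sum, trace_mul_eq_sum_pauliComponent,
    Finset.sum_add_distrib, ← Finset.smul_sum]
  rw [← Finset.sum_comm_cycle]
  simp only [← Finset.smul_sum, smul_comm (eps _ _ _) (1 / 2 : ℂ)]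
  module

end Spin

/-- First-spin vector component of the commutator of two 4×4 matrices over a `ℂ`-algebra:
`Tr((σ_l ⊗ σ₀) [A,B]) = (1/4) Σ_λ ([a_{0,λ}, b_{l,λ}] + [a_{l,λ}, b_{0,λ}]
  + i ε_{l l₁ l₂} {a_{l₁,λ}, b_{l₂,λ}})`. -/
theorem two_spin_commutator_first_vector (R : Type*) [Ring R] [Algebra ℂ R]
    (A B : Matrix (Fin 2 × Fin 2) (Fin 2 × Fin 2) R) (a b : Fin 4 → Fin 4 → R)
    (ha : ∀ κ μ : Fin 4, a κ μ = ((pauli R κ ⊗ₖ pauli R μ) * A).trace)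
    (hb : ∀ κ μ : Fin 4, b κ μ = ((pauli R κ ⊗ₖ pauli R μ) * B).trace) :
    ∀ l : Fin 3,
      ((pauli R l.succ ⊗ₖ pauli R 0) * (A * B - B * A)).trace =
        (1/4 : ℂ) •
          ∑ μ : Fin 4,
            ((a 0 μ * b l.succ μ - b l.succ μ * a 0 μ)
              + (a l.succ μ * b 0 μ - b 0 μ * a l.succ μ)
              + algebraMap ℂ R Complex.I *
                  ∑ l₁ : Fin 3, ∑ l₂ : Fin 3,
                    ((eps l l₁ l₂ : ℤ) : R) *
                      (a l₁.succ μ * b l₂.succ μ + b l₂.succ μ * a l₁.succ μ)) := by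
  obtain rfl : a = twoSpinComponent A := funext₂ ha
  obtain rfl : b = twoSpinComponent B := funext₂ hb
  intro l
  change twoSpinComponent (A * B - B * A) l.succ 0 = _
  rw [twoSpinComponent_sub, twoSpinComponent_succ_zero_mul, twoSpinComponent_succ_zero_mul,
    ← smul_sub, ← Finset.sum_sub_distrib]
  congr! 2 with μ
  rw [sum_eps_smul_swap l fun j k => twoSpinComponent B k.succ μ * twoSpinComponent A j.succ μ]
  simp only [← Algebra.smul_def, ← zsmul_eq_mul, smul_add, Finset.sum_add_distrib, smul_neg]
  abel
end
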